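/- arXiv:2412.20825 — 2 statements merged into one kernel-verified Lean document; each statement's English description precedes it below -/
import Mathlib

section
/- If f : Λ(n)³ → ℤ satisfies the Duistermaat axioms, then 0 ≤ f(L₁, L₂, L₃) ≤ n for all Lagrangian planes L₁, L₂, L₃. -/
open Matrix

/-!
Every Lagrangian plane meets the graph of the scalar matrix `t` trivially for all but finitely
many real `t`: if `(x, t x)` and `(y, s y)` lie in the same Lagrangian plane with `t ≠ s`, then
isotropy forces `⟨x, y⟩ = 0`, and an orthogonal family in `ℂⁿ` is finite
(`finite_bad_slopes`). Hence some `L₄ = G_t` is transversal to `L₁, L₂, L₃` at once. The symplectic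
map `(x, y) ↦ (t x - y, x)` takes `L₄` to `G_∞`, and a Lagrangian plane transversal to `G_∞` is the
graph of a Hermitian matrix (`exists_graph`), so `Lᵢ` becomes `G_{Aᵢ}`. A shear together with the
normalization gives `f(G_A, G_B, G_∞) = n₋(B - A)` (`f_graph_graph_vert`), and the cocycle property
with `L₄` yields
`f(L₁, L₂, L₃) = n₋(A₂ - A₁) + n₋(A₃ - A₂) - n₋(A₃ - A₁)`.

Both bounds are then facts on `n₋` of a sum of Hermitian matrices:
`n₋(A + C) ≤ n₋(A) + n₋(C)` (`negIdxM_add_le`) and `n₋(A) + n₋(C) ≤ n + n₋(A + C)`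
(`negIdxM_add_ge`).
-/

/-- The Hermitian symplectic space `ℂⁿ ⊕ ℂⁿ`. -/
abbrev SympSpace (n : ℕ) := (Fin n → ℂ) × (Fin n → ℂ)

/-- The symplectic form `ω((x₁,x₂),(y₁,y₂)) = ⟨x₁,y₂⟩ − ⟨x₂,y₁⟩`. -/
noncomputable def omegaForm {n : ℕ} (u v : SympSpace n) : ℂ :=
  star u.1 ⬝ᵥ v.2 - star u.2 ⬝ᵥ v.1

/-- A subspace is Lagrangian iff it coincides with its symplectic complement. -/
def IsLagrangian {n : ℕ} (L : Submodule ℂ (SympSpace n)) : Prop :=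
  ∀ v, v ∈ L ↔ ∀ u ∈ L, omegaForm u v = 0

/-- The Lagrangian Grassmannian `Λ(n)`. -/
abbrev LagGr (n : ℕ) := {L : Submodule ℂ (SympSpace n) // IsLagrangian L}

/-- The graph `G_M = {(x, Mx)}` of a matrix `M`. -/
noncomputable def graphOf {n : ℕ} (M : Matrix (Fin n) (Fin n) ℂ) :
    Submodule ℂ (SympSpace n) := LinearMap.graph M.mulVecLin

/-- The vertical subspace `G_∞ = 0 ⊕ ℂⁿ`. -/
noncomputable def vertSub (n : ℕ) : Submodule ℂ (SympSpace n) :=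
  (⊥ : Submodule ℂ (Fin n → ℂ)).prod (⊤ : Submodule ℂ (Fin n → ℂ))

/-- The negative index (Morse index) of a sesquilinear form: the maximal dimension of a
subspace on which it is negative definite. -/
noncomputable def formNegIdx {V : Type*} [AddCommGroup V] [Module ℂ V]
    (Q : V → V → ℂ) : ℕ :=
  sSup {d : ℕ | ∃ W : Submodule ℂ V, Module.finrank ℂ W = d ∧
    ∀ x ∈ W, x ≠ 0 → (Q x x).re < 0}

/-- The number of negative eigenvalues (Morse index) of a Hermitian matrix, as the
maximal dimension of a subspace on which the associated form is negative definite. -/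
noncomputable def negIdxM {n : ℕ} (A : Matrix (Fin n) (Fin n) ℂ) : ℕ :=
  formNegIdx (fun x y : Fin n → ℂ => star x ⬝ᵥ A.mulVec y)

/-- A symplectic transformation: a bijective linear map preserving `ω`. -/
def IsSymplecticMap {n : ℕ} (S : SympSpace n ≃ₗ[ℂ] SympSpace n) : Prop :=
  ∀ u v, omegaForm (S u) (S v) = omegaForm u v

/-- The Duistermaat axioms for `f : Λ(n)³ → ℤ`: normalization, symplectic invariance
and the cocycle property. -/
def SatisfiesDuiAxioms {n : ℕ} (f : LagGr n → LagGr n → LagGr n → ℤ) : Prop :=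
  (∀ (A : Matrix (Fin n) (Fin n) ℂ), A.IsHermitian →
    ∀ L₁ L₂ L₃ : LagGr n,
      L₁.val = graphOf (0 : Matrix (Fin n) (Fin n) ℂ) →
      L₂.val = graphOf A → L₃.val = vertSub n →
      f L₁ L₂ L₃ = negIdxM A) ∧
  (∀ S : SympSpace n ≃ₗ[ℂ] SympSpace n, IsSymplecticMap S →
    ∀ L₁ L₂ L₃ M₁ M₂ M₃ : LagGr n,
      M₁.val = (L₁.val).map S.toLinearMap →
      M₂.val = (L₂.val).map S.toLinearMap →
      M₃.val = (L₃.val).map S.toLinearMap →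
      f M₁ M₂ M₃ = f L₁ L₂ L₃) ∧
  (∀ L₁ L₂ L₃ L₄ : LagGr n,
    f L₁ L₂ L₃ - f L₁ L₂ L₄ + f L₁ L₃ L₄ - f L₂ L₃ L₄ = 0)

/-! ### The Morse index of a sum -/

lemma negIdxM_bddAbove {n : ℕ} (A : Matrix (Fin n) (Fin n) ℂ) :
    BddAbove {d : ℕ | ∃ W : Submodule ℂ (Fin n → ℂ), Module.finrank ℂ W = d ∧
      ∀ x ∈ W, x ≠ 0 → (star x ⬝ᵥ A.mulVec x).re < 0} := by
  refine ⟨n, ?_⟩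
  rintro d ⟨W, rfl, -⟩
  simpa using Submodule.finrank_le W

lemma le_negIdxM {n : ℕ} (A : Matrix (Fin n) (Fin n) ℂ) (W : Submodule ℂ (Fin n → ℂ))
    (hW : ∀ x ∈ W, x ≠ 0 → (star x ⬝ᵥ A.mulVec x).re < 0) :
    Module.finrank ℂ W ≤ negIdxM A :=
  le_csSup (negIdxM_bddAbove A) ⟨W, rfl, hW⟩

lemma exists_negIdxM {n : ℕ} (A : Matrix (Fin n) (Fin n) ℂ) :
    ∃ W : Submodule ℂ (Fin n → ℂ), Module.finrank ℂ W = negIdxM A ∧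
      ∀ x ∈ W, x ≠ 0 → (star x ⬝ᵥ A.mulVec x).re < 0 := by
  have h := Nat.sSup_mem (s := {d : ℕ | ∃ W : Submodule ℂ (Fin n → ℂ), Module.finrank ℂ W = d ∧
      ∀ x ∈ W, x ≠ 0 → (star x ⬝ᵥ A.mulVec x).re < 0})
    ⟨0, ⊥, by simp, by simp⟩ (negIdxM_bddAbove A)
  exact h

lemma hermitian_swap {n : ℕ} {A : Matrix (Fin n) (Fin n) ℂ} (hA : A.IsHermitian)
    (x y : Fin n → ℂ) : star x ⬝ᵥ A.mulVec y = star (star y ⬝ᵥ A.mulVec x) := by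
  rw [star_dotProduct, star_mulVec, hA.eq, ← dotProduct_mulVec]

/-- The form of a Hermitian matrix is nonnegative on a subspace of codimension at most `n₋(A)`,
namely the `A`-orthogonal complement of a maximal negative subspace `W`: a negative vector in it
could be added to `W`. -/
lemma exists_nonneg {n : ℕ} {A : Matrix (Fin n) (Fin n) ℂ} (hA : A.IsHermitian) :
    ∃ P : Submodule ℂ (Fin n → ℂ), n ≤ Module.finrank ℂ P + negIdxM A ∧
      ∀ x ∈ P, 0 ≤ (star x ⬝ᵥ A.mulVec x).re := by
  obtain ⟨W, hWd, hW⟩ := exists_negIdxM A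
  let b := Module.finBasis ℂ W
  let φ : (Fin n → ℂ) →ₗ[ℂ] (Fin (Module.finrank ℂ W) → ℂ) :=
    LinearMap.pi fun i => (dotProductBilin ℂ ℂ (star (b i : Fin n → ℂ))).comp A.mulVecLin
  have hφ : ∀ x i, φ x i = star (b i : Fin n → ℂ) ⬝ᵥ A.mulVec x := fun x i => rfl
  have horth : ∀ x ∈ LinearMap.ker φ, ∀ w ∈ W, star w ⬝ᵥ A.mulVec x = 0 := by
    intro x hx w hw
    have h1 := congrArg (Subtype.val) (b.sum_repr ⟨w, hw⟩)
    simp only [Submodule.coe_sum, Submodule.coe_smul] at h1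
    rw [← h1, star_sum, sum_dotProduct]
    refine Finset.sum_eq_zero fun i _ => ?_
    rw [star_smul, smul_dotProduct, ← hφ, LinearMap.mem_ker.1 hx]
    simp
  refine ⟨LinearMap.ker φ, ?_, ?_⟩
  · have h1 := LinearMap.finrank_range_add_finrank_ker φ
    have h2 := Submodule.finrank_le (LinearMap.range φ)
    simp only [Module.finrank_fintype_fun_eq_card, Fintype.card_fin] at h1 h2
    omega
  · intro x hx
    by_contra! hneg
    have hxW : x ∉ W := fun h => by
      rw [horth x hx x h] at hneg
      simp at hneg
    have hle := le_negIdxM A (W ⊔ Submodule.span ℂ {x}) (by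
      intro y hy hy0
      obtain ⟨w, hw, z, hz, rfl⟩ := Submodule.mem_sup.1 hy
      obtain ⟨c, rfl⟩ := Submodule.mem_span_singleton.1 hz
      have e1 := horth x hx w hw
      have e2 : star x ⬝ᵥ A.mulVec w = 0 := by rw [hermitian_swap hA, e1, star_zero]
      have e3 : star (w + c • x) ⬝ᵥ A.mulVec (w + c • x)
          = star w ⬝ᵥ A.mulVec w + ((Complex.normSq c : ℝ) : ℂ) * (star x ⬝ᵥ A.mulVec x) := by
        simp only [mulVec_add, mulVec_smul, star_add, star_smul, add_dotProduct, dotProduct_add,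
          smul_dotProduct, dotProduct_smul, e1, e2, Complex.normSq_eq_conj_mul_self, smul_eq_mul,
          Complex.star_def]
        ring
      rw [e3, Complex.add_re, Complex.re_ofReal_mul]
      by_cases hc : c = 0
      · subst hc
        simp only [zero_smul, add_zero] at hy0
        simpa using hW w hw hy0
      · have h1 := mul_neg_of_pos_of_neg (Complex.normSq_pos.2 hc) hneg
        by_cases hw0 : w = 0
        · subst hw0
          simpa using h1
        · linarith [hW w hw hw0])
    have hlt : W < W ⊔ Submodule.span ℂ {x} := by
      refine lt_of_le_of_ne le_sup_left fun h => hxW ?_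
      rw [h]
      exact Submodule.mem_sup_right (Submodule.mem_span_singleton_self x)
    have := Submodule.finrank_lt_finrank_of_lt hlt
    omega

lemma finrank_inf_ge {n : ℕ} (P Q : Submodule ℂ (Fin n → ℂ)) :
    Module.finrank ℂ P + Module.finrank ℂ Q ≤ n + Module.finrank ℂ (P ⊓ Q : Submodule ℂ _) := by
  have h1 := Submodule.finrank_sup_add_finrank_inf_eq P Q
  have h2 := Submodule.finrank_le (P ⊔ Q)
  simp only [Module.finrank_fintype_fun_eq_card, Fintype.card_fin] at h2
  omega

lemma negIdxM_add_le {n : ℕ} {A C : Matrix (Fin n) (Fin n) ℂ} (hA : A.IsHermitian)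
    (hC : C.IsHermitian) : negIdxM (A + C) ≤ negIdxM A + negIdxM C := by
  obtain ⟨W, hWd, hW⟩ := exists_negIdxM (A + C)
  obtain ⟨P, hPd, hP⟩ := exists_nonneg hA
  obtain ⟨Q, hQd, hQ⟩ := exists_nonneg hC
  have h0 : W ⊓ (P ⊓ Q) = ⊥ := by
    rw [Submodule.eq_bot_iff]
    rintro x ⟨hxW, hxP, hxQ⟩
    by_contra hx
    have h := hW x hxW hx
    rw [add_mulVec, dotProduct_add, Complex.add_re] at h
    linarith [hP x hxP, hQ x hxQ]
  have h1 := finrank_inf_ge P Q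
  have h2 := finrank_inf_ge W (P ⊓ Q)
  rw [h0, finrank_bot] at h2
  omega

lemma negIdxM_add_ge {n : ℕ} (A C : Matrix (Fin n) (Fin n) ℂ) :
    negIdxM A + negIdxM C ≤ n + negIdxM (A + C) := by
  obtain ⟨P, hPd, hP⟩ := exists_negIdxM A
  obtain ⟨Q, hQd, hQ⟩ := exists_negIdxM C
  have h1 := finrank_inf_ge P Q
  have h2 := le_negIdxM (A + C) (P ⊓ Q) (by
    rintro x ⟨hxP, hxQ⟩ hx
    rw [add_mulVec, dotProduct_add, Complex.add_re]
    linarith [hP x hxP hx, hQ x hxQ hx])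
  omega

/-! ### Lagrangian planes -/

lemma mem_graphOf {n : ℕ} (M : Matrix (Fin n) (Fin n) ℂ) (v : SympSpace n) :
    v ∈ graphOf M ↔ v.2 = M.mulVec v.1 := by
  simp [graphOf, LinearMap.mem_graph_iff]

lemma mem_vertSub {n : ℕ} (v : SympSpace n) : v ∈ vertSub n ↔ v.1 = 0 := by
  simp [vertSub, Submodule.mem_prod]

open scoped ComplexOrder in
lemma eq_zero_of_star_dotProduct {n : ℕ} {y : Fin n → ℂ}
    (h : ∀ x : Fin n → ℂ, star x ⬝ᵥ y = 0) : y = 0 :=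
  dotProduct_star_self_eq_zero.1 (h y)

lemma isLagrangian_vertSub (n : ℕ) : IsLagrangian (vertSub n) := by
  intro v
  rw [mem_vertSub]
  constructor
  · intro hv u hu
    rw [mem_vertSub] at hu
    simp [omegaForm, hv, hu]
  · intro h
    refine eq_zero_of_star_dotProduct fun x => ?_
    simpa [omegaForm] using h (0, x) (by rw [mem_vertSub])

lemma isLagrangian_graphOf {n : ℕ} {M : Matrix (Fin n) (Fin n) ℂ} (hM : M.IsHermitian) :
    IsLagrangian (graphOf M) := by
  have key : ∀ x y : Fin n → ℂ, star (M.mulVec x) ⬝ᵥ y = star x ⬝ᵥ M.mulVec y := by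
    intro x y
    rw [star_mulVec, hM.eq, ← dotProduct_mulVec]
  intro v
  rw [mem_graphOf]
  constructor
  · intro hv u hu
    rw [mem_graphOf] at hu
    rw [omegaForm, hv, hu, key, sub_self]
  · intro h
    refine sub_eq_zero.1 (eq_zero_of_star_dotProduct fun x => ?_)
    have := h (x, M.mulVec x) (by rw [mem_graphOf])
    rw [omegaForm, key] at this
    rw [dotProduct_sub]
    exact this

lemma isLagrangian_map {n : ℕ} {S : SympSpace n ≃ₗ[ℂ] SympSpace n} (hS : IsSymplecticMap S)
    {L : Submodule ℂ (SympSpace n)} (hL : IsLagrangian L) :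
    IsLagrangian (L.map S.toLinearMap) := by
  intro v
  obtain ⟨v, rfl⟩ := S.surjective v
  have h1 : S v ∈ L.map S.toLinearMap ↔ v ∈ L := by
    constructor
    · rintro ⟨w, hw, h⟩
      rwa [← S.injective h]
    · exact fun h => ⟨v, h, rfl⟩
  rw [h1, hL v]
  constructor
  · rintro h _ ⟨u, hu, rfl⟩
    exact (hS u v).trans (h u hu)
  · intro h u hu
    rw [← hS u v]
    exact h _ ⟨u, hu, rfl⟩

/-- A Lagrangian plane transversal to `G_∞` is the graph of a Hermitian matrix. Its projection to
the first factor is onto, since `(0, y)` belongs to `L` for any `y` orthogonal to the image. -/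
lemma exists_graph {n : ℕ} {L : Submodule ℂ (SympSpace n)} (hL : IsLagrangian L)
    (hv : ∀ y, ((0, y) : SympSpace n) ∈ L → y = 0) :
    ∃ A : Matrix (Fin n) (Fin n) ℂ, A.IsHermitian ∧ L = graphOf A := by
  let p : L →ₗ[ℂ] (Fin n → ℂ) := (LinearMap.fst ℂ _ _).comp L.subtype
  have hp : ∀ u : L, p u = u.1.1 := fun u => rfl
  have hinj : Function.Injective p := by
    rw [← LinearMap.ker_eq_bot, Submodule.eq_bot_iff]
    rintro ⟨⟨x, y⟩, hu⟩ h
    have hx : x = 0 := h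
    subst hx
    have := hv y hu
    subst this
    rfl
  have hsurj : Function.Surjective p := by
    rw [← LinearMap.range_eq_top]
    by_contra hne
    obtain ⟨φ, hφ0, hφ⟩ := Submodule.exists_le_ker_of_lt_top _ (lt_top_iff_ne_top.2 hne)
    have hφx : ∀ x, φ x = ∑ i, x i * φ (Pi.single i 1) := by
      intro x
      conv_lhs => rw [← (Pi.basisFun ℂ (Fin n)).sum_repr x]
      simp
    have hy := hv (fun i => star (φ (Pi.single i 1))) (by
      rw [hL]
      intro u hu
      have h1 : φ u.1 = 0 := hφ ⟨⟨u, hu⟩, rfl⟩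
      rw [hφx] at h1
      have h2 := congrArg star h1
      rw [star_sum, star_zero] at h2
      simp only [star_mul'] at h2
      simpa [omegaForm, dotProduct] using h2)
    apply hφ0
    ext i
    have := congrFun hy i
    simpa using this
  let e := LinearEquiv.ofBijective p ⟨hinj, hsurj⟩
  let g : (Fin n → ℂ) →ₗ[ℂ] (Fin n → ℂ) :=
    ((LinearMap.snd ℂ _ _).comp L.subtype).comp e.symm.toLinearMap
  have hg : ∀ u ∈ L, u.2 = (LinearMap.toMatrix' g).mulVec u.1 := by
    intro u hu
    rw [LinearMap.toMatrix'_mulVec]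
    have : e.symm u.1 = ⟨u, hu⟩ := by
      rw [LinearEquiv.symm_apply_eq]
      rfl
    simp [g, this]
  have hmem : ∀ x, ((x, (LinearMap.toMatrix' g).mulVec x) : SympSpace n) ∈ L := by
    intro x
    obtain ⟨u, rfl⟩ := hsurj x
    rw [hp, ← hg u.1 u.2]
    exact u.2
  refine ⟨LinearMap.toMatrix' g, ?_, ?_⟩
  · set M := LinearMap.toMatrix' g
    have key : ∀ x y : Fin n → ℂ, star x ⬝ᵥ (M - Mᴴ).mulVec y = 0 := by
      intro x y
      have h := (hL _).1 (hmem y) _ (hmem x)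
      rw [omegaForm, star_mulVec, ← dotProduct_mulVec] at h
      rw [sub_mulVec, dotProduct_sub]
      exact h
    have h0 : M - Mᴴ = 0 := by
      ext i j
      have := congrFun (eq_zero_of_star_dotProduct fun x => key x (Pi.single j 1)) i
      simpa using this
    exact (sub_eq_zero.1 h0).symm
  · ext u
    rw [mem_graphOf]
    refine ⟨hg u, fun h => ?_⟩
    have := hmem u.1
    rwa [← h] at this

open scoped ComplexOrder in
/-- Vectors `(x, t x)`, `(y, s y)` of one Lagrangian plane with `t ≠ s` satisfy `⟨x, y⟩ = 0`, so
the slopes of such nonzero vectors inject into a linearly independent family. -/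
lemma finite_bad_slopes {n : ℕ} {L : Submodule ℂ (SympSpace n)} (hL : IsLagrangian L) :
    {t : ℝ | ∃ x : Fin n → ℂ, x ≠ 0 ∧ ((x, (t : ℂ) • x) : SympSpace n) ∈ L}.Finite := by
  set B := {t : ℝ | ∃ x : Fin n → ℂ, x ≠ 0 ∧ ((x, (t : ℂ) • x) : SympSpace n) ∈ L}
  choose x hx0 hx using fun t : B => t.2
  have horth : ∀ s t : B, s ≠ t → star (x s) ⬝ᵥ x t = 0 := by
    intro s t hst
    have h := (hL _).1 (hx t) _ (hx s)
    simp only [omegaForm, dotProduct_smul, star_smul, smul_dotProduct, Complex.star_def,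
      Complex.conj_ofReal, smul_eq_mul, ← sub_mul] at h
    refine (mul_eq_zero.1 h).resolve_left fun h' => hst ?_
    exact Subtype.ext (Complex.ofReal_injective (sub_eq_zero.1 h')).symm
  have hli : LinearIndependent ℂ x := by
    rw [linearIndependent_iff']
    intro S c hc i hi
    have h := congrArg (fun v => star (x i) ⬝ᵥ v) hc
    simp only [dotProduct_sum, dotProduct_smul, dotProduct_zero, smul_eq_mul] at h
    rw [Finset.sum_eq_single i (fun j _ hj => by rw [horth i j hj.symm, mul_zero])
      (fun h => absurd hi h)] at h
    refine (mul_eq_zero.1 h).resolve_right fun h' => hx0 i ?_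
    exact dotProduct_star_self_eq_zero.1 h'
  have : Finite B := hli.finite
  exact Set.toFinite B

/-! ### Symplectic maps -/

/-- The symplectic shear `(x, y) ↦ (x, y - A x)`, taking `G_B` to `G_{B - A}`. -/
noncomputable def shear {n : ℕ} (A : Matrix (Fin n) (Fin n) ℂ) :
    SympSpace n ≃ₗ[ℂ] SympSpace n where
  toFun u := (u.1, u.2 - A.mulVec u.1)
  invFun u := (u.1, u.2 + A.mulVec u.1)
  map_add' u v := by
    ext i <;> simp [mulVec_add]
    ring
  map_smul' c u := by
    ext i <;> simp [mulVec_smul]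
    ring
  left_inv u := by simp
  right_inv u := by simp

lemma shear_symplectic {n : ℕ} {A : Matrix (Fin n) (Fin n) ℂ} (hA : A.IsHermitian) :
    IsSymplecticMap (shear A) := by
  intro u v
  have key : star (A.mulVec u.1) ⬝ᵥ v.1 = star u.1 ⬝ᵥ A.mulVec v.1 := by
    rw [star_mulVec, hA.eq, ← dotProduct_mulVec]
  simp only [omegaForm, shear, LinearEquiv.coe_mk, LinearMap.coe_mk, AddHom.coe_mk,
    dotProduct_sub, star_sub, sub_dotProduct, key]
  ring

lemma map_shear_graphOf {n : ℕ} (A B : Matrix (Fin n) (Fin n) ℂ) :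
    (graphOf B).map (shear A).toLinearMap = graphOf (B - A) := by
  ext v
  rw [Submodule.mem_map_equiv, mem_graphOf, mem_graphOf, sub_mulVec]
  change v.2 + A.mulVec v.1 = B.mulVec v.1 ↔ _
  rw [eq_sub_iff_add_eq]

lemma map_shear_vertSub {n : ℕ} (A : Matrix (Fin n) (Fin n) ℂ) :
    (vertSub n).map (shear A).toLinearMap = vertSub n := by
  ext v
  rw [Submodule.mem_map_equiv, mem_vertSub, mem_vertSub]
  rfl

/-- The symplectic map `(x, y) ↦ (t x - y, x)` for real `t`, taking `G_t` to `G_∞`. -/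
noncomputable def turn (n : ℕ) (t : ℝ) : SympSpace n ≃ₗ[ℂ] SympSpace n where
  toFun u := ((t : ℂ) • u.1 - u.2, u.1)
  invFun u := (u.2, (t : ℂ) • u.2 - u.1)
  map_add' u v := by
    ext i <;> simp
    ring
  map_smul' c u := by
    ext i <;> simp
    ring
  left_inv u := by simp
  right_inv u := by simp

lemma turn_symplectic (n : ℕ) (t : ℝ) : IsSymplecticMap (turn n t) := by
  intro u v
  simp only [omegaForm, turn, LinearEquiv.coe_mk, LinearMap.coe_mk, AddHom.coe_mk,
    dotProduct_sub, star_sub, sub_dotProduct, star_smul, smul_dotProduct, dotProduct_smul,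
    Complex.star_def, Complex.conj_ofReal]
  ring

/-- If `L` meets `G_t` trivially, then its image under `turn n t` is the graph of a Hermitian
matrix. -/
lemma exists_graph_turn {n : ℕ} {L : Submodule ℂ (SympSpace n)} (hL : IsLagrangian L) {t : ℝ}
    (ht : ¬ ∃ x : Fin n → ℂ, x ≠ 0 ∧ ((x, (t : ℂ) • x) : SympSpace n) ∈ L) :
    ∃ A : Matrix (Fin n) (Fin n) ℂ, A.IsHermitian ∧
      L.map (turn n t).toLinearMap = graphOf A := by
  refine exists_graph (isLagrangian_map (turn_symplectic n t) hL) fun y hy => ?_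
  rw [Submodule.mem_map_equiv] at hy
  by_contra hy0
  refine ht ⟨y, hy0, ?_⟩
  have h : (turn n t).symm ((0, y) : SympSpace n) = (y, (t : ℂ) • y - 0) := rfl
  rwa [h, sub_zero] at hy

/-! ### The index in terms of Hermitian matrices -/

lemma f_graph_graph_vert {n : ℕ} {f : LagGr n → LagGr n → LagGr n → ℤ}
    (hf : SatisfiesDuiAxioms f) {A B : Matrix (Fin n) (Fin n) ℂ} (hA : A.IsHermitian)
    (hB : B.IsHermitian) (L₁ L₂ L₃ : LagGr n) (h₁ : L₁.val = graphOf A)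
    (h₂ : L₂.val = graphOf B) (h₃ : L₃.val = vertSub n) :
    f L₁ L₂ L₃ = negIdxM (B - A) := by
  have h := hf.2.1 (shear A) (shear_symplectic hA) L₁ L₂ L₃
    ⟨graphOf 0, isLagrangian_graphOf isHermitian_zero⟩
    ⟨graphOf (B - A), isLagrangian_graphOf (hB.sub hA)⟩ L₃
    (by rw [h₁, map_shear_graphOf, sub_self]) (by rw [h₂, map_shear_graphOf])
    (by rw [h₃, map_shear_vertSub])
  rw [← h]
  exact hf.1 (B - A) (hB.sub hA) _ _ _ rfl rfl h₃

/-- If `f` satisfies the Duistermaat axioms then `0 ≤ f(L₁,L₂,L₃) ≤ n`. -/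
theorem duistermaat_index_bounds (n : ℕ) (hn : 1 ≤ n)
    (f : LagGr n → LagGr n → LagGr n → ℤ) (hf : SatisfiesDuiAxioms f)
    (L₁ L₂ L₃ : LagGr n) :
    0 ≤ f L₁ L₂ L₃ ∧ f L₁ L₂ L₃ ≤ n := by
  obtain ⟨t, ht⟩ := (((finite_bad_slopes L₁.2).union (finite_bad_slopes L₂.2)).union
    (finite_bad_slopes L₃.2)).exists_notMem
  simp only [Set.mem_union, Set.mem_ofPred_eq, not_or] at ht
  obtain ⟨A₁, hA₁, e₁⟩ := exists_graph_turn L₁.2 ht.1.1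
  obtain ⟨A₂, hA₂, e₂⟩ := exists_graph_turn L₂.2 ht.1.2
  obtain ⟨A₃, hA₃, e₃⟩ := exists_graph_turn L₃.2 ht.2
  let T : LagGr n → LagGr n := fun L =>
    ⟨L.val.map (turn n t).toLinearMap, isLagrangian_map (turn_symplectic n t) L.2⟩
  let V : LagGr n := ⟨vertSub n, isLagrangian_vertSub n⟩
  have hT := hf.2.1 (turn n t) (turn_symplectic n t) L₁ L₂ L₃ (T L₁) (T L₂) (T L₃) rfl rfl rfl
  have hc := hf.2.2 (T L₁) (T L₂) (T L₃) V
  rw [hT, f_graph_graph_vert hf hA₁ hA₂ (T L₁) (T L₂) V e₁ e₂ rfl,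
    f_graph_graph_vert hf hA₁ hA₃ (T L₁) (T L₃) V e₁ e₃ rfl,
    f_graph_graph_vert hf hA₂ hA₃ (T L₂) (T L₃) V e₂ e₃ rfl] at hc
  have hsum : (A₂ - A₁) + (A₃ - A₂) = A₃ - A₁ := by abel
  have hle := negIdxM_add_le (hA₂.sub hA₁) (hA₃.sub hA₂)
  have hge := negIdxM_add_ge (A₂ - A₁) (A₃ - A₂)
  rw [hsum] at hle hge
  omega
end

section
/- For any invertible n×n Hermitian matrices A and B, n_−(A − B) − n_−(B^{−1} − A^{−1}) = n_−(A) − n_−(B). -/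
/-!
Eliminating either variable from a single Hermitian form in two variables gives the result.
On `ℂⁿ × ℂⁿ` consider `⟨x, A x⟩ + 2 Re ⟨x, B z⟩ + ⟨z, B z⟩`. Completing the square in `z` writes it
as `q_B (x + z) + q_{A - B} x`; completing the square in `x` writes it as
`q_A (x + A⁻¹ B z) + q_{B⁻¹ - A⁻¹} (B z)`. Both substitutions are invertible, so by Sylvester's law
of inertia `n₋(B) + n₋(A - B) = n₋(A) + n₋(B⁻¹ - A⁻¹)`.

The law of inertia and additivity on direct sums are obtained through the predicate `HasNegIdx`,
which records a negative definite subspace together with a nonnegative subspace of complementary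
dimension. Such a pair pins down the index (`HasNegIdx.formNegIdx_eq`), is visibly compatible with
direct sums and injective changes of variables, and exists for every Hermitian matrix by the
spectral theorem.
-/

open Matrix

open Module

section HasNegIdx

variable {V V' : Type*} [AddCommGroup V] [Module ℂ V] [AddCommGroup V'] [Module ℂ V']

/-- `q` is negative definite on some `d`-dimensional subspace and nonnegative on some subspace of
dimension `dim V - d`. No structure on `q : V → ℝ` is assumed; in use it is `x ↦ Re Q(x, x)`. -/
def HasNegIdx (q : V → ℝ) (d : ℕ) : Prop :=
  ∃ W P : Submodule ℂ V, finrank ℂ W = d ∧ finrank ℂ W + finrank ℂ P = finrank ℂ V ∧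
    (∀ x ∈ W, x ≠ 0 → q x < 0) ∧ ∀ x ∈ P, 0 ≤ q x

/-- A negative definite subspace meets the nonnegative subspace trivially, so its dimension is at
most `d`. -/
theorem HasNegIdx.formNegIdx_eq [FiniteDimensional ℂ V] {Q : V → V → ℂ} {d : ℕ}
    (h : HasNegIdx (fun x => (Q x x).re) d) : formNegIdx Q = d := by
  obtain ⟨W, P, hd, hdim, hW, hP⟩ := h
  refine IsGreatest.csSup_eq ⟨⟨W, hd, hW⟩, ?_⟩
  rintro k ⟨U, rfl, hU⟩
  have hdisj : Disjoint U P := by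
    rw [Submodule.disjoint_def]
    intro x hxU hxP
    by_contra hx
    exact absurd (hP x hxP) (not_le.mpr (hU x hxU hx))
  have := Submodule.finrank_add_finrank_le_of_disjoint hdisj
  omega

theorem HasNegIdx.map {q : V → ℝ} {q' : V' → ℝ} {d : ℕ} (h : HasNegIdx q d)
    (f : V →ₗ[ℂ] V') (hf : Function.Injective f) (hdim : finrank ℂ V = finrank ℂ V')
    (hq : ∀ x, q' (f x) = q x) : HasNegIdx q' d := by
  obtain ⟨W, P, hd, hWP, hW, hP⟩ := h
  have hr (S : Submodule ℂ V) : finrank ℂ (S.map f) = finrank ℂ S :=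
    (Submodule.equivMapOfInjective f hf S).finrank_eq.symm
  refine ⟨W.map f, P.map f, by rw [hr, hd], by rw [hr, hr, hWP, hdim], ?_, ?_⟩
  · rintro _ ⟨x, hx, rfl⟩ hne
    rw [hq]
    exact hW x hx fun h0 => hne (by rw [h0, map_zero])
  · rintro _ ⟨x, hx, rfl⟩
    rw [hq]
    exact hP x hx

theorem finrank_submodule_prod [FiniteDimensional ℂ V] [FiniteDimensional ℂ V']
    (W : Submodule ℂ V) (W' : Submodule ℂ V') :
    finrank ℂ (W.prod W') = finrank ℂ W + finrank ℂ W' := by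
  rw [← Module.finrank_prod]
  exact LinearEquiv.finrank_eq
    { toFun := fun x => (⟨x.1.1, x.2.1⟩, ⟨x.1.2, x.2.2⟩)
      invFun := fun x => ⟨(x.1, x.2), x.1.2, x.2.2⟩
      map_add' := fun _ _ => rfl
      map_smul' := fun _ _ => rfl }

theorem HasNegIdx.prod [FiniteDimensional ℂ V] [FiniteDimensional ℂ V']
    {q : V → ℝ} {q' : V' → ℝ} {d d' : ℕ} (h : HasNegIdx q d)
    (h' : HasNegIdx q' d') (h0 : q 0 = 0) (h0' : q' 0 = 0) :
    HasNegIdx (fun x : V × V' => q x.1 + q' x.2) (d + d') := by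
  obtain ⟨W, P, hd, hWP, hW, hP⟩ := h
  obtain ⟨W', P', hd', hWP', hW', hP'⟩ := h'
  refine ⟨W.prod W', P.prod P', ?_, ?_, ?_, ?_⟩
  · rw [finrank_submodule_prod, hd, hd']
  · rw [finrank_submodule_prod, finrank_submodule_prod, Module.finrank_prod]
    omega
  · rintro ⟨x, y⟩ ⟨hx, hy⟩ hne
    simp only at hx hy ⊢
    by_cases hx0 : x = 0
    · subst hx0
      have hy0 : y ≠ 0 := fun h => hne (by rw [h]; rfl)
      rw [h0, zero_add]
      exact hW' y hy hy0
    · by_cases hy0 : y = 0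
      · subst hy0
        rw [h0', add_zero]
        exact hW x hx hx0
      · exact add_neg (hW x hx hx0) (hW' y hy hy0)
  · rintro ⟨x, y⟩ ⟨hx, hy⟩
    exact add_nonneg (hP x hx) (hP' y hy)

end HasNegIdx

/-- For a diagonal form the two subspaces are the coordinate subspaces of the negative and of the
nonnegative coefficients. -/
theorem exists_hasNegIdx_diagonal {n : ℕ} (c : Fin n → ℝ) :
    ∃ d, HasNegIdx (fun x : Fin n → ℂ => ∑ i, c i * Complex.normSq (x i)) d := by
  let W : Submodule ℂ (Fin n → ℂ) :=
    { carrier := {x | ∀ i, 0 ≤ c i → x i = 0}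
      add_mem' := fun hx hy i hi => by simp [hx i hi, hy i hi]
      zero_mem' := fun _ _ => rfl
      smul_mem' := fun a x hx i hi => by simp [hx i hi] }
  let P : Submodule ℂ (Fin n → ℂ) :=
    { carrier := {x | ∀ i, c i < 0 → x i = 0}
      add_mem' := fun hx hy i hi => by simp [hx i hi, hy i hi]
      zero_mem' := fun _ _ => rfl
      smul_mem' := fun a x hx i hi => by simp [hx i hi] }
  have hc : IsCompl W P := by
    constructor
    · rw [Submodule.disjoint_def]
      intro x hx hx'
      ext i
      rcases le_or_gt 0 (c i) with hi | hi
      · exact hx i hi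
      · exact hx' i hi
    · rw [codisjoint_iff, eq_top_iff]
      intro x _
      rw [Submodule.mem_sup]
      refine ⟨fun i => if c i < 0 then x i else 0, fun i hi => if_neg (not_lt.mpr hi),
        fun i => if c i < 0 then 0 else x i, fun i hi => if_pos hi, ?_⟩
      ext i
      by_cases hi : c i < 0 <;> simp [hi]
  refine ⟨_, W, P, rfl, Submodule.finrank_add_eq_of_isCompl hc, ?_, ?_⟩
  · intro x hx hne
    obtain ⟨j, hj⟩ := Function.ne_iff.mp hne
    refine Finset.sum_neg' (fun i _ => ?_) ⟨j, Finset.mem_univ j, ?_⟩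
    · rcases le_or_gt 0 (c i) with hi | hi
      · simp [hx i hi]
      · exact mul_nonpos_of_nonpos_of_nonneg hi.le (Complex.normSq_nonneg _)
    · have hj' : c j < 0 := by
        by_contra hcj
        exact hj (hx j (not_lt.mp hcj))
      exact mul_neg_of_neg_of_pos hj' (Complex.normSq_pos.mpr hj)
  · intro x hx
    refine Finset.sum_nonneg fun i _ => ?_
    rcases le_or_gt 0 (c i) with hi | hi
    · exact mul_nonneg hi (Complex.normSq_nonneg _)
    · simp [hx i hi]

theorem Matrix.IsHermitian.hasNegIdx {n : ℕ} {A : Matrix (Fin n) (Fin n) ℂ}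
    (hA : A.IsHermitian) :
    HasNegIdx (fun x : Fin n → ℂ => (star x ⬝ᵥ A *ᵥ x).re) (negIdxM A) := by
  obtain ⟨d, hd⟩ := exists_hasNegIdx_diagonal hA.eigenvalues
  let U : Matrix (Fin n) (Fin n) ℂ := hA.eigenvectorUnitary
  have hU : Uᴴ * U = 1 := Unitary.coe_star_mul_self hA.eigenvectorUnitary
  have hAU : A = U * diagonal (fun i => (hA.eigenvalues i : ℂ)) * Uᴴ := hA.spectral_theorem
  have hUAU : Uᴴ * A * U = diagonal (fun i => (hA.eigenvalues i : ℂ)) := by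
    conv_lhs => rw [hAU]
    simp only [Matrix.mul_assoc, hU, Matrix.mul_one]
    rw [← Matrix.mul_assoc, hU, Matrix.one_mul]
  have h : HasNegIdx (fun x : Fin n → ℂ => (star x ⬝ᵥ A *ᵥ x).re) d := by
    refine hd.map U.mulVecLin ?_ rfl fun x => ?_
    · intro x y hxy
      have := congrArg (Uᴴ *ᵥ ·) hxy
      simpa [Matrix.mulVec_mulVec, hU] using this
    · have : star (U *ᵥ x) ⬝ᵥ A *ᵥ U *ᵥ x = star x ⬝ᵥ (Uᴴ * A * U) *ᵥ x := by
        rw [star_mulVec, ← dotProduct_mulVec, mulVec_mulVec, mulVec_mulVec, Matrix.mul_assoc]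
      simp only [mulVecLin_apply]
      rw [this, hUAU]
      simp only [dotProduct, mulVec_diagonal, Complex.re_sum, Pi.star_apply]
      refine Finset.sum_congr rfl fun i _ => ?_
      simp [Complex.normSq_apply]
      ring
  have hid : negIdxM A = d := h.formNegIdx_eq
  rwa [hid]

theorem Matrix.IsHermitian.star_mulVec_dotProduct {n : ℕ} {A : Matrix (Fin n) (Fin n) ℂ}
    (hA : A.IsHermitian) (v w : Fin n → ℂ) : star (A *ᵥ v) ⬝ᵥ w = star v ⬝ᵥ A *ᵥ w := by
  rw [star_mulVec, hA.eq, dotProduct_mulVec]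

/-- The two completed squares agree; in use `w = A⁻¹ B z`, so that `z - w` is
`(B⁻¹ - A⁻¹) (B z)`. -/
theorem completed_squares_eq {n : ℕ} {A B : Matrix (Fin n) (Fin n) ℂ}
    (hA : A.IsHermitian) (hB : B.IsHermitian) (x z w : Fin n → ℂ) (hw : A *ᵥ w = B *ᵥ z) :
    star (x + w) ⬝ᵥ A *ᵥ (x + w) + star (B *ᵥ z) ⬝ᵥ (z - w) =
      star (x + z) ⬝ᵥ B *ᵥ (x + z) + star x ⬝ᵥ (A - B) *ᵥ x := by
  have h1 : star w ⬝ᵥ A *ᵥ x = star z ⬝ᵥ B *ᵥ x := by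
    rw [← hA.star_mulVec_dotProduct, hw, hB.star_mulVec_dotProduct]
  have h2 : star (B *ᵥ z) ⬝ᵥ w = star w ⬝ᵥ B *ᵥ z := by
    rw [← hw, hA.star_mulVec_dotProduct]
  simp only [star_add, mulVec_add, add_dotProduct, dotProduct_add, dotProduct_sub, sub_mulVec,
    hw, h1, h2, hB.star_mulVec_dotProduct z z]
  ring

/-- For invertible Hermitian matrices `A, B`:
`n₋(A − B) − n₋(B⁻¹ − A⁻¹) = n₋(A) − n₋(B)`. -/
theorem morse_index_difference_inverse (n : ℕ) (A B : Matrix (Fin n) (Fin n) ℂ)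
    (hA : A.IsHermitian) (hB : B.IsHermitian) (hAu : IsUnit A) (hBu : IsUnit B) :
    (negIdxM (A - B) : ℤ) - negIdxM (B⁻¹ - A⁻¹) = (negIdxM A : ℤ) - negIdxM B := by
  have hAd : IsUnit A.det := (isUnit_iff_isUnit_det A).mp hAu
  have hBd : IsUnit B.det := (isUnit_iff_isUnit_det B).mp hBu
  have h1 := hB.hasNegIdx.prod (hA.sub hB).hasNegIdx (by simp) (by simp)
  have h2 := hA.hasNegIdx.prod (hB.inv.sub hA.inv).hasNegIdx (by simp) (by simp)
  -- In the coordinates `u = x + z` and `x`, the map `(x, z) ↦ (x + A⁻¹ B z, B z)`.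
  let Z : (Fin n → ℂ) × (Fin n → ℂ) →ₗ[ℂ] (Fin n → ℂ) :=
    LinearMap.fst ℂ _ _ - LinearMap.snd ℂ _ _
  let f : (Fin n → ℂ) × (Fin n → ℂ) →ₗ[ℂ] (Fin n → ℂ) × (Fin n → ℂ) :=
    (LinearMap.snd ℂ _ _ + (A⁻¹ * B).mulVecLin ∘ₗ Z).prod (B.mulVecLin ∘ₗ Z)
  have hf : ∀ p, f p = (p.2 + (A⁻¹ * B) *ᵥ (p.1 - p.2), B *ᵥ (p.1 - p.2)) := fun _ => rfl
  have hinj : Function.Injective f := by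
    rintro ⟨u, x⟩ ⟨u', x'⟩ h
    rw [hf, hf, Prod.mk.injEq] at h
    obtain ⟨ha, hb⟩ := h
    have hz : u - x = u' - x' := mulVec_injective_of_isUnit hBu hb
    simp only at ha
    rw [hz] at ha
    have hx : x = x' := add_right_cancel ha
    subst hx
    rw [sub_left_injective hz]
  have h3 := h1.map f hinj rfl (q' := fun p =>
    (star p.1 ⬝ᵥ A *ᵥ p.1).re + (star p.2 ⬝ᵥ (B⁻¹ - A⁻¹) *ᵥ p.2).re) (by
      rintro ⟨u, x⟩
      rw [hf]
      simp only
      have hw : A *ᵥ ((A⁻¹ * B) *ᵥ (u - x)) = B *ᵥ (u - x) := by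
        rw [mulVec_mulVec, ← Matrix.mul_assoc, mul_nonsing_inv A hAd, Matrix.one_mul]
      have hy : (B⁻¹ - A⁻¹) *ᵥ B *ᵥ (u - x) = (u - x) - (A⁻¹ * B) *ᵥ (u - x) := by
        rw [sub_mulVec, mulVec_mulVec, mulVec_mulVec, nonsing_inv_mul B hBd, one_mulVec]
      have key := completed_squares_eq hA hB x (u - x) _ hw
      rw [add_sub_cancel] at key
      rw [hy, ← Complex.add_re, key, Complex.add_re])
  -- Both indices are computed by `formNegIdx` of the same form, hence agree.
  have e2 := HasNegIdx.formNegIdx_eq (Q := fun p q : (Fin n → ℂ) × (Fin n → ℂ) =>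
    star p.1 ⬝ᵥ A *ᵥ q.1 + star p.2 ⬝ᵥ (B⁻¹ - A⁻¹) *ᵥ q.2) (by simpa using h2)
  have e3 := HasNegIdx.formNegIdx_eq (Q := fun p q : (Fin n → ℂ) × (Fin n → ℂ) =>
    star p.1 ⬝ᵥ A *ᵥ q.1 + star p.2 ⬝ᵥ (B⁻¹ - A⁻¹) *ᵥ q.2) (by simpa using h3)
  omega
end
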